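/- Let H be a graph such that every connected component of H has a feedback vertex set of size at most d (a d-quasi-forest), and suppose H is connected with feedback vertex set Z of size at most d. Then every minimal blocking set Y of H satisfies |Y| ≤ |Z| + 2 ≤ d + 2. -/

import Mathlib

attribute [local instance] Classical.propDecidable

namespace VCKernel

variable {V : Type*} [Fintype V] [DecidableEq V]

/-- `S` is an independent set of `G`. -/
def IsIndep (G : SimpleGraph V) (S : Finset V) : Prop :=
  ∀ u ∈ S, ∀ v ∈ S, ¬ G.Adj u v

/-- Independence number of the subgraph of `G` induced on the vertex set `A`. -/
noncomputable def alphaOn (G : SimpleGraph V) (A : Set V) : ℕ :=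
  sSup {n | ∃ S : Finset V, ↑S ⊆ A ∧ IsIndep G S ∧ S.card = n}

/-- Independence number `α(G)`. -/
noncomputable def alpha (G : SimpleGraph V) : ℕ := alphaOn G Set.univ

/-- `Y` is a blocking set: deleting it decreases the independence number. -/
def IsBlocking (G : SimpleGraph V) (Y : Finset V) : Prop :=
  alphaOn G (Set.univ \ ↑Y) < alpha G

/-- `Y` is a minimal blocking set. -/
def IsMinBlocking (G : SimpleGraph V) (Y : Finset V) : Prop :=
  IsBlocking G Y ∧ ∀ Y' ⊂ Y, ¬ IsBlocking G Y'

/-- Open neighborhood of the vertex set `X'` in `G`. -/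
def nbhd (G : SimpleGraph V) (X' : Finset V) : Set V :=
  {v | ∃ u ∈ X', G.Adj u v}

/-- Number of conflicts induced by `X'` on the induced subgraph with vertex set `A`. -/
noncomputable def conf (G : SimpleGraph V) (A : Set V) (X' : Finset V) : ℕ :=
  alphaOn G A - alphaOn G (A \ nbhd G X')

/-- `C` is (the vertex set of) a connected component of the subgraph of `G`
induced on `A`. -/
def IsCompOf (G : SimpleGraph V) (A C : Set V) : Prop :=
  C ⊆ A ∧ (G.induce C).Connected ∧ ∀ u ∈ C, ∀ v ∈ A, G.Adj u v → v ∈ C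

/-- Feasible solution to the Independent Set LP of the subgraph induced on `A`. -/
def FeasISOn (G : SimpleGraph V) (A : Set V) (x : V → ℝ) : Prop :=
  (∀ v ∈ A, 0 ≤ x v ∧ x v ≤ 1) ∧
    ∀ u ∈ A, ∀ v ∈ A, G.Adj u v → x u + x v ≤ 1

/-- Half-integrality on `A`. -/
def HalfIntOn (A : Set V) (x : V → ℝ) : Prop :=
  ∀ v ∈ A, x v = 0 ∨ x v = 1/2 ∨ x v = 1

/-- Objective value of an LP solution on vertex set `A`. -/
noncomputable def weightOn (A : Set V) (x : V → ℝ) : ℝ :=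
  ∑ v, if v ∈ A then x v else 0

/-- `x` is an optimum half-integral solution to the Independent Set LP
of the subgraph induced on `A`. -/
def OptHIOn (G : SimpleGraph V) (A : Set V) (x : V → ℝ) : Prop :=
  FeasISOn G A x ∧ HalfIntOn A x ∧
    ∀ y : V → ℝ, FeasISOn G A y → HalfIntOn A y → weightOn A y ≤ weightOn A x

/-- Feasible solution to the Vertex Cover LP of `G`. -/
def FeasVC (G : SimpleGraph V) (x : V → ℝ) : Prop :=
  (∀ v, 0 ≤ x v ∧ x v ≤ 1) ∧ ∀ u v, G.Adj u v → 1 ≤ x u + x v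

/-- Optimum value of the Independent Set LP of `G`. -/
noncomputable def lpIS (G : SimpleGraph V) : ℝ :=
  sSup {w | ∃ x : V → ℝ, FeasISOn G Set.univ x ∧ w = ∑ v, x v}

/-- Optimum value of the Vertex Cover LP of `G`. -/
noncomputable def lpVC (G : SimpleGraph V) : ℝ :=
  sInf {w | ∃ x : V → ℝ, FeasVC G x ∧ w = ∑ v, x v}

/-- `C` is a vertex cover of `G`. -/
def IsVC (G : SimpleGraph V) (C : Finset V) : Prop :=
  ∀ u v, G.Adj u v → u ∈ C ∨ v ∈ C

/-- Vertex cover number of `G`. -/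
noncomputable def vcNum (G : SimpleGraph V) : ℕ :=
  sInf {n | ∃ C : Finset V, IsVC G C ∧ C.card = n}

/-- `Z` is a feedback vertex set of `G`. -/
def IsFVS (G : SimpleGraph V) (Z : Finset V) : Prop :=
  (G.induce ((↑Z : Set V)ᶜ)).IsAcyclic

/-- `Z` is an odd cycle transversal of `G`. -/
def IsOCT (G : SimpleGraph V) (Z : Finset V) : Prop :=
  (G.induce ((↑Z : Set V)ᶜ)).Colorable 2

/-- `G` is a `d`-quasi-forest: each connected component has a feedback
vertex set of size at most `d`. -/
def QuasiForest (G : SimpleGraph V) (d : ℕ) : Prop :=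
  ∀ C : Set V, IsCompOf G Set.univ C →
    ∃ Z : Finset V, Z.card ≤ d ∧ (G.induce (C \ ↑Z)).IsAcyclic

/-- `G` is `d`-quasi-bipartite: each connected component has an odd cycle
transversal of size at most `d`. -/
def QuasiBipartite (G : SimpleGraph V) (d : ℕ) : Prop :=
  ∀ C : Set V, IsCompOf G Set.univ C →
    ∃ Z : Finset V, Z.card ≤ d ∧ (G.induce (C \ ↑Z)).Colorable 2

/-- Feedback vertex set number of `G`. -/
noncomputable def fvsNum (G : SimpleGraph V) : ℕ :=
  sInf {n | ∃ Z : Finset V, IsFVS G Z ∧ Z.card = n}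

/-- Odd cycle transversal number of `G`. -/
noncomputable def octNum (G : SimpleGraph V) : ℕ :=
  sInf {n | ∃ Z : Finset V, IsOCT G Z ∧ Z.card = n}

/-- The subgraph of `G` induced on `A` has treedepth at most `k`
(elimination-forest characterization of treedepth). -/
def tdLE (G : SimpleGraph V) : ℕ → Set V → Prop
  | 0, A => A = ∅
  | (k+1), A => ∀ C : Set V, IsCompOf G A C → ∃ v ∈ C, tdLE G k (C \ {v})

lemma le_alphaOn (G : SimpleGraph V) (A : Set V) (S : Finset V) (h : ↑S ⊆ A)
    (hS : IsIndep G S) : S.card ≤ alphaOn G A := by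
  apply le_csSup
  · refine ⟨Fintype.card V, ?_⟩
    rintro n ⟨T, -, -, rfl⟩
    exact Finset.card_le_univ T
  · exact ⟨S, h, hS, rfl⟩

lemma exists_alphaOn (G : SimpleGraph V) (A : Set V) :
    ∃ S : Finset V, ↑S ⊆ A ∧ IsIndep G S ∧ S.card = alphaOn G A := by
  have : alphaOn G A ∈ {n | ∃ S : Finset V, ↑S ⊆ A ∧ IsIndep G S ∧ S.card = n} := by
    apply Nat.sSup_mem
    · exact ⟨0, ∅, by simp, by intro u hu; simp at hu, by simp⟩
    · refine ⟨Fintype.card V, ?_⟩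
      rintro n ⟨T, -, -, rfl⟩
      exact Finset.card_le_univ T
  exact this

lemma exists_private (G : SimpleGraph V) (Y : Finset V) (hY : IsMinBlocking G Y) (y : V)
    (hy : y ∈ Y) : ∃ S : Finset V, IsIndep G S ∧ S.card = alpha G ∧
      ∀ x ∈ Y, x ∈ S ↔ x = y := by
  have h := hY.2 (Y.erase y) (Finset.erase_ssubset hy)
  obtain ⟨S, h1, h2, h3⟩ := exists_alphaOn G (Set.univ \ ↑(Y.erase y))
  have h4 : S.card ≤ alpha G := le_alphaOn G _ S (Set.subset_univ _) h2
  have h5 : alpha G ≤ S.card := by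
    rw [h3]; exact not_lt.mp h
  have h6 : ∀ x ∈ Y, x ∈ S → x = y := by
    intro x hx hxS
    by_contra hne
    exact (h1 hxS).2 (by simp [hne, hx])
  have h7 : y ∈ S := by
    by_contra hyS
    have : S.card ≤ alphaOn G (Set.univ \ ↑Y) := by
      apply le_alphaOn _ _ _ _ h2
      intro x hx
      refine ⟨trivial, fun hxY => hyS ?_⟩
      rw [← h6 x hxY hx]; exact hx
    have := hY.1
    unfold IsBlocking at this
    omega
  refine ⟨S, h2, le_antisymm h4 h5, fun x hx => ⟨h6 x hx, ?_⟩⟩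
  rintro rfl; exact h7

/-- truncated counting function -/
def gfun (m s t : ℕ) : ℚ := if m ≤ t + s then m else if s < t then t else 0

/-- auxiliary weight -/
def psi (m s t : ℕ) : ℚ :=
  if t = 0 ∨ m ≤ t then 0 else if t ≤ s then 1 - t / s else
    if m ≤ t + s then -1 + (m - t) / s else 0

lemma psi_step (m s t : ℕ) (hs : 1 ≤ s) (hsm : 2 * (s + 1) < m) (ht : t ≤ m) :
    psi m (s+1) t = psi m s t + (1 / (s:ℚ) - 1 / ((s + 1 : ℕ):ℚ)) * (t - gfun m s t) := by
  have hs0 : (s:ℚ) ≠ 0 := by positivity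
  have hs1 : (s:ℚ) + 1 ≠ 0 := by positivity
  unfold psi gfun
  rcases Nat.eq_zero_or_pos t with rfl | h0
  · simp
    intro h; omega
  rcases Nat.lt_or_ge t m with h1 | h1
  · have e0 : ¬ (t = 0 ∨ m ≤ t) := by omega
    rcases Nat.lt_or_ge s t with h2 | h2
    · have e1 : ¬ t ≤ s := by omega
      rcases Nat.lt_or_ge (t + s) m with h3 | h3
      · have e2 : ¬ m ≤ t + s := by omega
        by_cases h4 : t = s + 1
        · have e3 : t ≤ s + 1 := by omega
          simp only [e0, e1, e2, e3, h2, if_true, if_false]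
          subst h4
          rw [div_self (by push_cast; exact hs1)]
          ring
        · have e3 : ¬ t ≤ s + 1 := by omega
          by_cases h5 : m = t + (s + 1)
          · have e4 : m ≤ t + (s + 1) := by omega
            simp only [e0, e1, e2, e3, e4, h2, if_true, if_false]
            subst h5
            push_cast
            field_simp; ring
          · have e4 : ¬ m ≤ t + (s + 1) := by omega
            simp only [e0, e1, e2, e3, e4, h2, if_true, if_false]
            ring
      · have e2 : m ≤ t + s := by omega
        have e3 : ¬ t ≤ s + 1 := by omega
        have e4 : m ≤ t + (s + 1) := by omega
        simp only [e0, e1, e2, e3, e4, if_true, if_false]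
        push_cast
        field_simp; ring
    · have e1 : t ≤ s := by omega
      have e2 : ¬ m ≤ t + s := by omega
      have e3 : t ≤ s + 1 := by omega
      have e4 : ¬ s < t := by omega
      simp only [e0, e1, e2, e3, e4, if_true, if_false]
      push_cast
      field_simp; ring
  · have : t = m := by omega
    subst this
    simp

lemma psi_one (m t : ℕ) (hm : 3 ≤ m) : psi m 1 t = 0 := by
  unfold psi
  split_ifs with h1 h2 h3
  · rfl
  · have : t = 1 := by omega
    subst this; simp
  · have : m = t + 1 := by omega
    subst this; simp
  · rfl

lemma psi_last (m s t : ℕ) (hs : 1 ≤ s) (hsm : 2 * s < m) (hsm' : m ≤ 2 * s + 2) (ht : t ≤ m) :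
    ((if 1 ≤ t then 1 else 0) + (if t = m then 1 else 0) : ℚ) - 2 * t / m
      = psi m s t + (1 / (s:ℚ) - 2 / m) * (t - gfun m s t) := by
  have hs0 : (s:ℚ) ≠ 0 := by positivity
  have hm0 : (m:ℚ) ≠ 0 := by
    have : 0 < m := by omega
    positivity
  unfold psi gfun
  rcases Nat.eq_zero_or_pos t with rfl | h0
  · rw [if_neg (by omega), if_neg (by omega), if_pos (by omega), if_neg (by omega),
      if_neg (by omega)]
    simp
  rw [if_pos (show 1 ≤ t by omega)]
  rcases Nat.lt_or_ge t m with h1 | h1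
  · rw [if_neg (by omega), if_neg (by omega)]
    rcases Nat.lt_or_ge s t with h2 | h2
    · rw [if_neg (by omega)]
      rcases Nat.lt_or_ge (t + s) m with h3 | h3
      · rw [if_neg (by omega), if_neg (by omega), if_pos (by omega)]
        have : m = 2 * t := by omega
        subst this
        push_cast at hm0 ⊢
        field_simp; simp
      · rw [if_pos (by omega), if_pos (by omega)]
        field_simp; ring
    · rw [if_pos (by omega), if_neg (by omega), if_neg (by omega)]
      field_simp; ring
  · have : t = m := by omega
    subst this
    simp
    field_simp; norm_num

lemma numeric (c : V → ℕ) (m : ℕ) (a : ℚ) (hm : 3 ≤ m) (hc : ∀ v, c v ≤ m)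
    (hsum : ∑ v, (c v : ℚ) = m * a)
    (hg : ∀ s, 1 ≤ s → 2 * s < m → ∑ v, gfun m s (c v) ≤ m * (a - 1)) :
    2 * a + (m - 2) ≤ ∑ v, ((if 1 ≤ c v then 1 else 0) + (if c v = m then 1 else 0) : ℚ) := by
  have hm0 : (0:ℚ) < m := by
    have : 0 < m := by omega
    positivity
  have hU : ∀ s, 1 ≤ s → 2 * s < m → (m:ℚ) ≤ ∑ v, ((c v : ℚ) - gfun m s (c v)) := by
    intro s h1 h2
    rw [Finset.sum_sub_distrib, hsum]
    have := hg s h1 h2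
    linarith
  have hB : ∀ s, 1 ≤ s → 2 * s < m → (m:ℚ) * (1 - 1 / s) ≤ ∑ v, psi m s (c v) := by
    intro s h1
    induction s, h1 using Nat.le_induction with
    | base => intro _; simp [psi_one m _ hm]
    | succ s h1 ih =>
      intro h2
      have i1 := ih (by omega)
      have i2 := hU s h1 (by omega)
      rw [Finset.sum_congr rfl (fun v _ => psi_step m s (c v) h1 h2 (hc v)),
        Finset.sum_add_distrib, ← Finset.mul_sum]
      have hpos : (0:ℚ) < s := by positivity
      have i3 : (0:ℚ) ≤ 1 / (s:ℚ) - 1 / ((s + 1 : ℕ):ℚ) := by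
        have : 1 / ((s + 1 : ℕ):ℚ) ≤ 1 / (s:ℚ) :=
          one_div_le_one_div_of_le hpos (by push_cast; linarith)
        linarith
      have i4 := mul_le_mul_of_nonneg_left i2 i3
      nlinarith
  set L := (m - 1) / 2 with hL
  have l1 : 1 ≤ L := by omega
  have l2 : 2 * L < m := by omega
  have l3 : m ≤ 2 * L + 2 := by omega
  have e : ∑ v, (((if 1 ≤ c v then 1 else 0) + (if c v = m then 1 else 0) : ℚ) - 2 * c v / m)
      = ∑ v, psi m L (c v) + (1 / (L:ℚ) - 2 / m) * ∑ v, ((c v:ℚ) - gfun m L (c v)) := by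
    rw [Finset.mul_sum, ← Finset.sum_add_distrib]
    exact Finset.sum_congr rfl (fun v _ => psi_last m L (c v) l1 l2 l3 (hc v))
  rw [Finset.sum_sub_distrib] at e
  have e2 : ∑ v, (2 * (c v : ℚ) / m) = 2 * a := by
    rw [← Finset.sum_div, ← Finset.mul_sum, hsum]
    field_simp
  have hpos : (0:ℚ) < L := by positivity
  have w0 : (0:ℚ) ≤ 1 / (L:ℚ) - 2 / m := by
    have : (2:ℚ) * L ≤ m := by exact_mod_cast l2.le
    rw [sub_nonneg, div_le_div_iff₀ hm0 hpos]
    linarith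
  have b1 := hB L l1 l2
  have b2 := mul_le_mul_of_nonneg_left (hU L l1 l2) w0
  have b3 : (1 / (L:ℚ) - 2 / m) * m = m / L - 2 := by field_simp
  have b4 : (m:ℚ) * (1 - 1 / L) = m - m / L := by ring
  rw [e2] at e
  linarith

/-- half-integral rounding along a feedback vertex set -/
lemma rounding (G : SimpleGraph V) (Z P Q : Finset V) (hZ : IsFVS G Z) (hPQ : P ⊆ Q)
    (hadj : ∀ u ∈ P, ∀ v ∈ Q, ¬ G.Adj u v) : P.card + Q.card ≤ 2 * alpha G + Z.card := by
  obtain ⟨col⟩ := SimpleGraph.IsAcyclic.colorable_two hZ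
  let A : Fin 2 → Finset V := fun i =>
    P ∪ Q.filter (fun v => ∃ h : v ∉ Z, col ⟨v, by simpa using h⟩ = i)
  have hA : ∀ i, (A i).card ≤ alpha G := by
    intro i
    apply le_alphaOn _ _ _ (Set.subset_univ _)
    intro u hu v hv huv
    have hQ : ∀ w, w ∈ A i → w ∈ Q := by
      intro w hw
      rcases Finset.mem_union.1 hw with h | h
      · exact hPQ h
      · exact (Finset.mem_filter.1 h).1
    rcases Finset.mem_union.1 hu with h | h
    · exact hadj u h v (hQ v hv) huv
    rcases Finset.mem_union.1 hv with h' | h'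
    · exact hadj v h' u (hQ u hu) huv.symm
    obtain ⟨-, hz, hc⟩ := Finset.mem_filter.1 h
    obtain ⟨-, hz', hc'⟩ := Finset.mem_filter.1 h'
    exact col.valid (v := ⟨u, by simpa using hz⟩) (w := ⟨v, by simpa using hz'⟩)
      (by simpa using huv) (hc.trans hc'.symm)
  have h1 : Q ⊆ (A 0 ∪ A 1) ∪ Z := by
    intro v hv
    by_cases hz : v ∈ Z
    · simp [hz]
    · have : col ⟨v, by simpa using hz⟩ = 0 ∨ col ⟨v, by simpa using hz⟩ = 1 := by
        generalize col ⟨v, _⟩ = x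
        fin_cases x <;> simp
      rcases this with h | h
      · exact Finset.mem_union_left _ (Finset.mem_union_left _
          (Finset.mem_union_right _ (Finset.mem_filter.2 ⟨hv, hz, h⟩)))
      · exact Finset.mem_union_left _ (Finset.mem_union_right _
          (Finset.mem_union_right _ (Finset.mem_filter.2 ⟨hv, hz, h⟩)))
  have h2 : P ⊆ A 0 ∩ A 1 := fun v hv =>
    Finset.mem_inter.2 ⟨Finset.mem_union_left _ hv, Finset.mem_union_left _ hv⟩
  have h3 := Finset.card_le_card h1
  have h4 := Finset.card_le_card h2
  have h5 := Finset.card_union_le (A 0 ∪ A 1) Z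
  have h6 := Finset.card_union_add_card_inter (A 0) (A 1)
  have := hA 0
  have := hA 1
  omega

lemma main_bound (G : SimpleGraph V) (Z Y : Finset V) (hZ : IsFVS G Z)
    (hY : IsMinBlocking G Y) (hm : 3 ≤ Y.card) : Y.card ≤ Z.card + 2 := by
  choose! S hS1 hS2 hS3 using exists_private G Y hY
  let c : V → ℕ := fun v => (Y.filter (fun y => v ∈ S y)).card
  have hc : ∀ v, c v ≤ Y.card := fun v => Finset.card_filter_le _ _
  have hcY : ∀ y ∈ Y, c y = 1 := by
    intro y hy
    refine Finset.card_eq_one.2 ⟨y, ?_⟩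
    ext x
    simp only [Finset.mem_filter, Finset.mem_singleton]
    constructor
    · rintro ⟨hx, h⟩
      exact ((hS3 x hx y hy).1 h).symm
    · rintro rfl
      exact ⟨hy, (hS3 x hy x hy).2 rfl⟩
  have hcadj : ∀ u v, G.Adj u v → c u + c v ≤ Y.card := by
    intro u v huv
    have hd : Disjoint (Y.filter (fun y => u ∈ S y)) (Y.filter (fun y => v ∈ S y)) := by
      rw [Finset.disjoint_left]
      intro y h1 h2
      rw [Finset.mem_filter] at h1 h2
      exact hS1 y h1.1 u h1.2 v h2.2 huv
    rw [← Finset.card_union_of_disjoint hd]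
    apply Finset.card_le_card
    intro x hx
    simp only [Finset.mem_union, Finset.mem_filter] at hx
    tauto
  have swap : ∀ T : V → Finset V, ∑ v, (Y.filter (fun y => v ∈ T y)).card
      = ∑ y ∈ Y, (T y).card := by
    intro T
    simp only [Finset.card_filter]
    rw [Finset.sum_comm]
    simp
  have hsumN : ∑ v, c v = Y.card * alpha G := by
    rw [swap S, Finset.sum_congr rfl hS2]
    simp
  have hα : 1 ≤ alpha G := by
    have := hY.1
    unfold IsBlocking at this
    omega
  have hg : ∀ s, 1 ≤ s → 2 * s < Y.card →
      ∑ v, gfun Y.card s (c v) ≤ Y.card * ((alpha G : ℚ) - 1) := by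
    intro s h1 h2
    let T : V → Finset V := fun y =>
      Finset.univ.filter (fun v => Y.card ≤ c v + s ∨ (s < c v ∧ v ∈ S y))
    have hgT : ∀ v, gfun Y.card s (c v) = ((Y.filter (fun y => v ∈ T y)).card : ℚ) := by
      intro v
      unfold gfun
      split_ifs with i1 i2
      · congr 2
        ext y; simp [T, i1]
      · simp only [T, Finset.mem_filter, Finset.mem_univ, true_and, i1, i2, false_or]
        rfl
      · simp [T, i1, i2]
    have hT : ∀ y ∈ Y, (T y).card ≤ alpha G - 1 := by
      intro y hy
      have hs : ∀ v ∈ T y, s < c v := by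
        intro v hv
        simp only [T, Finset.mem_filter, Finset.mem_univ, true_and] at hv
        omega
      have : (T y).card ≤ alphaOn G (Set.univ \ ↑Y) := by
        apply le_alphaOn
        · intro v hv
          refine ⟨trivial, fun hvY => ?_⟩
          have := hs v hv
          have := hcY v hvY
          omega
        · intro u hu v hv huv
          have a1 := hs u hu
          have a2 := hs v hv
          have a3 := hcadj u v huv
          simp only [T, Finset.mem_filter, Finset.mem_univ, true_and] at hu hv
          rcases hu with hu | hu
          · omega
          rcases hv with hv | hv
          · omega
          exact hS1 y hy u hu.2 v hv.2 huv
      have h' := hY.1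
      unfold IsBlocking at h'
      omega
    rw [Finset.sum_congr rfl (fun v _ => hgT v), ← Nat.cast_sum, swap T]
    have := Finset.sum_le_sum hT
    rw [Finset.sum_const, smul_eq_mul] at this
    calc ((∑ y ∈ Y, (T y).card : ℕ) : ℚ) ≤ ((Y.card * (alpha G - 1) : ℕ) : ℚ) := by
          exact_mod_cast this
      _ = _ := by push_cast [hα]; ring
  have key := numeric c Y.card (alpha G) hm hc (by exact_mod_cast hsumN) hg
  have hr := rounding G Z (Finset.univ.filter (fun v => c v = Y.card))
    (Finset.univ.filter (fun v => 1 ≤ c v)) hZ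
    (by
      intro v hv
      simp only [Finset.mem_filter, Finset.mem_univ, true_and] at hv ⊢
      omega)
    (by
      intro u hu v hv huv
      have := hcadj u v huv
      simp only [Finset.mem_filter, Finset.mem_univ, true_and] at hu hv
      omega)
  rw [Finset.sum_add_distrib, Finset.sum_boole, Finset.sum_boole] at key
  have hr' : ((Finset.univ.filter (fun v => c v = Y.card)).card : ℚ)
    + (Finset.univ.filter (fun v => 1 ≤ c v)).card ≤ 2 * alpha G + Z.card := by
    exact_mod_cast hr
  have : (Y.card : ℚ) ≤ Z.card + 2 := by linarith
  exact_mod_cast this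

/-- If `G` is connected with a feedback vertex set `Z` of size at most `d`,
then every minimal blocking set `Y` satisfies `|Y| ≤ |Z| + 2 ≤ d + 2`. -/
theorem stmt5 (G : SimpleGraph V) (d : ℕ) (Z Y : Finset V)
    (hconn : G.Connected) (hZ : IsFVS G Z) (hZd : Z.card ≤ d)
    (hY : IsMinBlocking G Y) :
    Y.card ≤ Z.card + 2 ∧ Z.card + 2 ≤ d + 2 := by
  refine ⟨?_, by omega⟩
  by_cases h : 3 ≤ Y.card
  · exact main_bound G Z Y hZ hY h
  · omega

end VCKernel
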